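/- arXiv:1907.07513 — 2 statements merged into one kernel-verified Lean document; each statement's English description precedes it below -/
import Mathlib

section
/- Let k ≥ 1, let G be a finite simple 2-regular graph that is a disjoint union of 3k cycles of lengths s₁, …, s_{3k} (each s_i ≥ 3), let n = s₁ + ⋯ + s_{3k}, assume n/(4k) < s_i < n/(2k) for all i and that k divides n, let A be a set of n agents partitioned into k types each of size n/k, and let τ ∈ (1/2, 1). Then (in both the one-versus-all and the one-versus-one version of the swap Schelling game) there exists a bijective placement p : A → V(G) with placement cost 0 if and only if {1, …, 3k} can be partitioned into k disjoint triples, each triple's cycle lengths summing to n/k. -/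
open Finset
open scoped Classical

noncomputable section

namespace Schelling

variable {V A : Type*} [Fintype V] [Fintype A] {k : ℕ}

/-- The set of neighbors of agent `a` under placement `p`. -/
def nbrs (G : SimpleGraph V) (p : A → V) (a : A) : Finset A :=
  Finset.univ.filter fun b => G.Adj (p a) (p b)

/-- `|N⁺_p(a)|`: the number of neighbors of `a` under `p` having the same type as `a`. -/
def posCount (G : SimpleGraph V) (t : A → Fin k) (p : A → V) (a : A) : ℕ :=
  (Finset.univ.filter fun b => G.Adj (p a) (p b) ∧ t b = t a).card

/-- One-versus-all `|N⁻_p(a)|`: the number of neighbors of `a` whose type differs from `t a`. -/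
def negCountAll (G : SimpleGraph V) (t : A → Fin k) (p : A → V) (a : A) : ℕ :=
  (Finset.univ.filter fun b => G.Adj (p a) (p b) ∧ t b ≠ t a).card

/-- One-versus-one `|N⁻_p(a)|`: the size of a largest set of neighbors of `a`
of one common type different from `t a`. -/
def negCountOne (G : SimpleGraph V) (t : A → Fin k) (p : A → V) (a : A) : ℕ :=
  (Finset.univ.filter fun T : Fin k => T ≠ t a).sup fun T =>
    (Finset.univ.filter fun b => G.Adj (p a) (p b) ∧ t b = T).card

/-- The cost of agent `a` in the one-versus-all version. -/
def costAll (G : SimpleGraph V) (t : A → Fin k) (τ : ℝ) (p : A → V) (a : A) : ℝ :=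
  if nbrs G p a = ∅ then τ
  else max 0 (τ - (posCount G t p a : ℝ) /
    ((posCount G t p a : ℝ) + (negCountAll G t p a : ℝ)))

/-- The cost of agent `a` in the one-versus-one version. -/
def costOne (G : SimpleGraph V) (t : A → Fin k) (τ : ℝ) (p : A → V) (a : A) : ℝ :=
  if nbrs G p a = ∅ then τ
  else max 0 (τ - (posCount G t p a : ℝ) /
    ((posCount G t p a : ℝ) + (negCountOne G t p a : ℝ)))

/-- A swap of the (distinct) agents `a` and `b` turning placement `p` into `q`,
which strictly decreases the cost of both agents (cost function `c`). -/
def SwapMove (c : (A → V) → A → ℝ) (p q : A → V) (a b : A) : Prop :=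
  a ≠ b ∧ q = p ∘ (Equiv.swap a b) ∧ c q a < c p a ∧ c q b < c p b

/-- `q` is obtained from `p` by an improving swap. -/
def ImprovingSwap (c : (A → V) → A → ℝ) (p q : A → V) : Prop :=
  ∃ a b, SwapMove c p q a b

/-- A placement is swap-stable if it admits no improving swap. -/
def SwapStable (c : (A → V) → A → ℝ) (p : A → V) : Prop :=
  ∀ q, ¬ ImprovingSwap c p q

/-- Some finite sequence of improving swaps starting at `p₀` ends in a swap-stable placement. -/
def ReachesStableSwap (c : (A → V) → A → ℝ) (p₀ : A → V) : Prop :=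
  ∃ (n : ℕ) (q : ℕ → A → V), q 0 = p₀ ∧
    (∀ i < n, ImprovingSwap c (q i) (q (i + 1))) ∧ SwapStable c (q n)

/-- A jump of agent `a` to the node `v` (unoccupied under `p`) turning placement `p`
into `q`, which strictly decreases the cost of `a` (cost function `c`). -/
def JumpMove (c : (A → V) → A → ℝ) (p q : A → V) (a : A) (v : V) : Prop :=
  (∀ b, p b ≠ v) ∧ q = Function.update p a v ∧ c q a < c p a

/-- `q` is obtained from `p` by an improving jump. -/
def ImprovingJump (c : (A → V) → A → ℝ) (p q : A → V) : Prop :=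
  ∃ a v, JumpMove c p q a v

/-- A placement is jump-stable if it admits no improving jump. -/
def JumpStable (c : (A → V) → A → ℝ) (p : A → V) : Prop :=
  ∀ q, ¬ ImprovingJump c p q

/-- Some finite sequence of improving jumps starting at `p₀` ends in a jump-stable placement. -/
def ReachesStableJump (c : (A → V) → A → ℝ) (p₀ : A → V) : Prop :=
  ∃ (n : ℕ) (q : ℕ → A → V), q 0 = p₀ ∧
    (∀ i < n, ImprovingJump c (q i) (q (i + 1))) ∧ JumpStable c (q n)

/-- The placement cost: the number of discontent agents (one-versus-all cost). -/
def placementCost (G : SimpleGraph V) (t : A → Fin k) (τ : ℝ) (p : A → V) : ℕ :=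
  (Finset.univ.filter fun a => costAll G t τ p a ≠ 0).card

/-- A graph is `Δ`-regular if every node has exactly `Δ` neighbors. -/
def IsRegular (G : SimpleGraph V) (Δ : ℕ) : Prop :=
  ∀ v : V, (Finset.univ.filter fun u => G.Adj v u).card = Δ

/-- The placement cost in the one-versus-one version: the number of discontent agents. -/
def placementCostOne (G : SimpleGraph V) (t : A → Fin k) (τ : ℝ) (p : A → V) : ℕ :=
  (Finset.univ.filter fun a => costOne G t τ p a ≠ 0).card

/-!
When every node has between `1` and `Δ` neighbors and `1 - 1 / Δ < τ ≤ 1`, a single neighbor of a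
foreign type makes an agent discontent in either version, so cost `0` means that every connected
component is monochromatic. Such placements correspond to colorings of the components by types
in which each type fills exactly as many nodes as it has agents. If all sizes lie strictly between
a quarter and a half of the common type size, every color class consists of exactly three
components.
-/

section Contentment

theorem max_zero_sub_div_eq_zero_iff {P N Δ : ℕ} {τ : ℝ} (hPN : P + N ≠ 0)
    (hPΔ : N ≠ 0 → P < Δ) (hτ : 1 - 1 / (Δ : ℝ) < τ) (hτ1 : τ ≤ 1) :
    max 0 (τ - (P : ℝ) / ((P : ℝ) + (N : ℝ))) = 0 ↔ N = 0 := by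
  rcases Nat.eq_zero_or_pos N with rfl | hN
  · have hP : (P : ℝ) ≠ 0 := by exact_mod_cast hPN
    simp [div_self hP, hτ1]
  · have hfrac : (P : ℝ) / (P + N) < τ := calc
      (P : ℝ) / (P + N) ≤ P / (P + 1) := by gcongr; exact_mod_cast hN
      _ = 1 - 1 / (P + 1) := by field_simp; ring
      _ ≤ 1 - 1 / Δ := by gcongr; exact_mod_cast hPΔ hN.ne'
      _ < τ := hτ
    simp [hN.ne', hfrac]

variable {V A : Type*} [Fintype A] (G : SimpleGraph V) (t : A → Fin k) (p : A → V) (a : A)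

theorem posCount_le_card_nbrs : posCount G t p a ≤ #(nbrs G p a) :=
  card_le_card (monotone_filter_right _ fun _ _ hb => hb.1)

theorem posCount_eq_card_nbrs_iff :
    posCount G t p a = #(nbrs G p a) ↔ ∀ b, G.Adj (p a) (p b) → t b = t a := by
  rw [posCount, nbrs, ← filter_filter, card_filter_eq_iff]
  simp

theorem negCountAll_eq_zero_iff :
    negCountAll G t p a = 0 ↔ ∀ b, G.Adj (p a) (p b) → t b = t a := by
  simp [negCountAll, filter_eq_empty_iff]

theorem negCountOne_eq_zero_iff :
    negCountOne G t p a = 0 ↔ ∀ b, G.Adj (p a) (p b) → t b = t a := by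
  rw [negCountOne, ← Nat.bot_eq_zero, Finset.sup_eq_bot_iff]
  simp only [mem_filter_univ, Nat.bot_eq_zero, card_eq_zero, filter_eq_empty_iff, mem_univ,
    true_implies, not_and]
  exact ⟨fun h b hab => by_contra fun hne => h (t b) hne hab rfl,
    fun h T hT b hab hb => hT (hb ▸ h b hab)⟩

variable {G t p a} {Δ : ℕ} {τ : ℝ}

theorem cost_eq_zero_iff {N : ℕ} (hN : N = 0 ↔ ∀ b, G.Adj (p a) (p b) → t b = t a)
    (hne : (nbrs G p a).Nonempty) (hΔ : #(nbrs G p a) ≤ Δ)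
    (hτ : 1 - 1 / (Δ : ℝ) < τ) (hτ1 : τ ≤ 1) :
    (if nbrs G p a = ∅ then τ
      else max 0 (τ - (posCount G t p a : ℝ) / ((posCount G t p a : ℝ) + (N : ℝ)))) = 0 ↔
      ∀ b, G.Adj (p a) (p b) → t b = t a := by
  have hle := posCount_le_card_nbrs G t p a
  have hposN : N = 0 ↔ posCount G t p a = #(nbrs G p a) :=
    hN.trans (posCount_eq_card_nbrs_iff G t p a).symm
  have hcard := hne.card_pos
  have hsum : posCount G t p a + N ≠ 0 := by lia
  have hlt : N ≠ 0 → posCount G t p a < Δ := by lia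
  rw [if_neg hne.ne_empty, max_zero_sub_div_eq_zero_iff hsum hlt hτ hτ1, hN]

theorem costAll_eq_zero_iff (hne : (nbrs G p a).Nonempty) (hΔ : #(nbrs G p a) ≤ Δ)
    (hτ : 1 - 1 / (Δ : ℝ) < τ) (hτ1 : τ ≤ 1) :
    costAll G t τ p a = 0 ↔ ∀ b, G.Adj (p a) (p b) → t b = t a :=
  cost_eq_zero_iff (negCountAll_eq_zero_iff G t p a) hne hΔ hτ hτ1

theorem costOne_eq_zero_iff (hne : (nbrs G p a).Nonempty) (hΔ : #(nbrs G p a) ≤ Δ)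
    (hτ : 1 - 1 / (Δ : ℝ) < τ) (hτ1 : τ ≤ 1) :
    costOne G t τ p a = 0 ↔ ∀ b, G.Adj (p a) (p b) → t b = t a :=
  cost_eq_zero_iff (negCountOne_eq_zero_iff G t p a) hne hΔ hτ hτ1

end Contentment

/-- A placement is segregated if adjacent agents always have the same type; for `τ` close to `1`
this is what placement cost `0` amounts to in both versions of the game. -/
def IsSegregated {V A T : Type*} (G : SimpleGraph V) (t : A → T) (p : A → V) : Prop :=
  ∀ a b, G.Adj (p a) (p b) → t b = t a

section PlacementCost

variable {G : SimpleGraph V} {p : A → V} {t : A → Fin k} {Δ : ℕ} {τ : ℝ}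

theorem card_nbrs (hp : Function.Bijective p) (a : A) : #(nbrs G p a) = G.degree (p a) := by
  rw [← G.card_neighborFinset_eq_degree]
  exact card_bijective p hp (by simp [nbrs])

theorem placementCost_eq_zero_iff (hp : Function.Bijective p) (hpos : ∀ v, 0 < G.degree v)
    (hΔ : ∀ v, G.degree v ≤ Δ) (hτ : 1 - 1 / (Δ : ℝ) < τ) (hτ1 : τ ≤ 1) :
    placementCost G t τ p = 0 ↔ IsSegregated G t p := by
  simp only [placementCost, card_eq_zero, filter_eq_empty_iff, mem_univ, true_implies, not_not,
    ne_eq, IsSegregated]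
  exact forall_congr' fun a => costAll_eq_zero_iff
    (card_pos.mp (card_nbrs hp a ▸ hpos _)) (card_nbrs hp a ▸ hΔ _) hτ hτ1

theorem placementCostOne_eq_zero_iff (hp : Function.Bijective p) (hpos : ∀ v, 0 < G.degree v)
    (hΔ : ∀ v, G.degree v ≤ Δ) (hτ : 1 - 1 / (Δ : ℝ) < τ) (hτ1 : τ ≤ 1) :
    placementCostOne G t τ p = 0 ↔ IsSegregated G t p := by
  simp only [placementCostOne, card_eq_zero, filter_eq_empty_iff, mem_univ, true_implies, not_not,
    ne_eq, IsSegregated]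
  exact forall_congr' fun a => costOne_eq_zero_iff
    (card_pos.mp (card_nbrs hp a ▸ hpos _)) (card_nbrs hp a ▸ hΔ _) hτ hτ1

end PlacementCost

section ComponentColoring

theorem exists_comp_connectedComponentMk_eq_iff {V T : Type*} {G : SimpleGraph V} {c : V → T} :
    (∃ f : G.ConnectedComponent → T, ∀ v, f (G.connectedComponentMk v) = c v) ↔
      ∀ u v, G.Adj u v → c v = c u := by
  constructor
  · rintro ⟨f, hf⟩ u v huv
    rw [← hf u, ← hf v, SimpleGraph.ConnectedComponent.sound huv.reachable]
  · intro hc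
    have hwalk : ∀ {u v}, G.Walk u v → c u = c v := fun w => by
      induction w with
      | nil => rfl
      | cons huv _ ih => rw [← ih, hc _ _ huv]
    exact ⟨SimpleGraph.ConnectedComponent.lift c fun _ _ w _ => hwalk w, fun _ => rfl⟩

theorem isSegregated_iff_exists_coloring {V A T : Type*} {G : SimpleGraph V} {t : A → T}
    {p : A → V} (hp : Function.Bijective p) :
    IsSegregated G t p ↔
      ∃ f : G.ConnectedComponent → T, ∀ a, f (G.connectedComponentMk (p a)) = t a := by
  obtain ⟨e, rfl⟩ : ∃ e : A ≃ V, e = p := ⟨Equiv.ofBijective p hp, rfl⟩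
  have hcoloring := exists_comp_connectedComponentMk_eq_iff (G := G) (c := t ∘ e.symm)
  simpa [IsSegregated, e.forall_congr_left] using hcoloring.symm

theorem exists_bijective_comp_eq_iff {V A T : Type*} [Fintype V] [Fintype A] [DecidableEq T]
    {t : A → T} {g : V → T} :
    (∃ p : A → V, Function.Bijective p ∧ ∀ a, g (p a) = t a) ↔
      ∀ j, #{v | g v = j} = #{a | t a = j} := by
  constructor
  · rintro ⟨p, hp, hgp⟩ j
    exact (card_bijective p hp (by simp [hgp])).symm
  · intro hcard
    have hfiber : ∀ j, Nonempty ({a // t a = j} ≃ {v // g v = j}) := fun j => by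
      rw [← Fintype.card_eq, Fintype.card_subtype, Fintype.card_subtype, hcard]
    let e : A ≃ V := Equiv.ofFiberEquiv fun j => (hfiber j).some
    exact ⟨e, e.bijective, Equiv.ofFiberEquiv_map _⟩

theorem exists_bijective_isSegregated_iff {V A T : Type*} [Fintype V] [Fintype A] [DecidableEq T]
    {G : SimpleGraph V} {t : A → T} :
    (∃ p : A → V, Function.Bijective p ∧ IsSegregated G t p) ↔
      ∃ f : G.ConnectedComponent → T,
        ∀ j, #{v | f (G.connectedComponentMk v) = j} = #{a | t a = j} := by
  simp only [← exists_bijective_comp_eq_iff]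
  rw [exists_comm]
  refine exists_congr fun p => ?_
  rw [exists_and_left]
  exact and_congr_right isSegregated_iff_exists_coloring

theorem sum_componentSize_eq_card {V ι T : Type*} [Fintype V] [Fintype ι] [DecidableEq T]
    {G : SimpleGraph V} {s : ι → ℕ} (comp : G.ConnectedComponent ≃ ι)
    (hsize : ∀ i, #{v | G.connectedComponentMk v = comp.symm i} = s i) (f : ι → T) (j : T) :
    ∑ i with f i = j, s i = #{v | f (comp (G.connectedComponentMk v)) = j} := by
  simp only [← hsize, Equiv.eq_symm_apply]
  simpa only [mem_filter_univ] using
    sum_card_fiberwise_eq_card_filter univ {i | f i = j} fun v => comp (G.connectedComponentMk v)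

end ComponentColoring

theorem card_eq_three_of_sum_eq {ι : Type*} {F : Finset ι} {s : ι → ℕ} {B : ℕ} (hB : 0 < B)
    (hlow : ∀ i ∈ F, B < 4 * s i) (hhigh : ∀ i ∈ F, 2 * s i < B) (hsum : ∑ i ∈ F, s i = B) :
    #F = 3 := by
  have hne : F.Nonempty := nonempty_of_sum_ne_zero (hsum.trans_ne hB.ne')
  have hlt : #F * B < 4 * B := calc
    #F * B = ∑ _i ∈ F, B := by simp
    _ < ∑ i ∈ F, 4 * s i := sum_lt_sum_of_nonempty hne hlow
    _ = 4 * B := by rw [← mul_sum, hsum]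
  have hgt : 2 * B < #F * B := calc
    2 * B = ∑ i ∈ F, 2 * s i := by rw [← mul_sum, hsum]
    _ < ∑ _i ∈ F, B := sum_lt_sum_of_nonempty hne hhigh
    _ = #F * B := by simp
  have hcard_lt : #F < 4 := lt_of_mul_lt_mul_right hlt B.zero_le
  have hcard_gt : 2 < #F := lt_of_mul_lt_mul_right hgt B.zero_le
  omega

theorem exists_bijective_isSegregated_iff_exists_triples {V A ι T : Type*} [Fintype V] [Fintype A]
    [Fintype ι] [DecidableEq T] {G : SimpleGraph V} {s : ι → ℕ} {t : A → T} {B : ℕ}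
    (comp : G.ConnectedComponent ≃ ι)
    (hsize : ∀ i, #{v | G.connectedComponentMk v = comp.symm i} = s i)
    (hB : 0 < B) (hlow : ∀ i, B < 4 * s i) (hhigh : ∀ i, 2 * s i < B)
    (hsizes : ∀ j, #{a | t a = j} = B) :
    (∃ p : A → V, Function.Bijective p ∧ IsSegregated G t p) ↔
      ∃ f : ι → T, (∀ j, #{i | f i = j} = 3) ∧ ∀ j, ∑ i with f i = j, s i = B := by
  rw [exists_bijective_isSegregated_iff]
  simp only [hsizes]
  constructor
  · rintro ⟨f, hf⟩
    have hsum : ∀ j, ∑ i with f (comp.symm i) = j, s i = B := fun j => by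
      simpa [hf] using sum_componentSize_eq_card comp hsize (f ∘ comp.symm) j
    exact ⟨f ∘ comp.symm, fun j => card_eq_three_of_sum_eq hB (fun i _ => hlow i)
      (fun i _ => hhigh i) (hsum j), hsum⟩
  · rintro ⟨f, -, hsum⟩
    exact ⟨f ∘ comp, fun j => (sum_componentSize_eq_card comp hsize f j).symm.trans (hsum j)⟩

theorem IsRegular.degree_eq {V : Type*} [Fintype V] {G : SimpleGraph V} {Δ : ℕ}
    (hG : IsRegular G Δ) (v : V) : G.degree v = Δ := by
  rw [← hG v, ← G.card_neighborFinset_eq_degree, G.neighborFinset_eq_filter]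

theorem statement15_general {V A ι : Type*} [Fintype V] [Fintype A] [Fintype ι] {k : ℕ}
    {G : SimpleGraph V} {Δ : ℕ} (hpos : ∀ v, 0 < G.degree v) (hΔ : ∀ v, G.degree v ≤ Δ)
    {s : ι → ℕ} (comp : G.ConnectedComponent ≃ ι)
    (hsize : ∀ i, #{v | G.connectedComponentMk v = comp.symm i} = s i)
    {B : ℕ} (hB : 0 < B) (hlow : ∀ i, B < 4 * s i) (hhigh : ∀ i, 2 * s i < B)
    {t : A → Fin k} (hsizes : ∀ j, #{a | t a = j} = B)
    {τ : ℝ} (hτ : 1 - 1 / (Δ : ℝ) < τ) (hτ1 : τ ≤ 1) :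
    ((∃ p : A → V, Function.Bijective p ∧ placementCost G t τ p = 0) ↔
      ∃ f : ι → Fin k, (∀ j, #{i | f i = j} = 3) ∧ ∀ j, ∑ i with f i = j, s i = B) ∧
    ((∃ p : A → V, Function.Bijective p ∧ placementCostOne G t τ p = 0) ↔
      ∃ f : ι → Fin k, (∀ j, #{i | f i = j} = 3) ∧ ∀ j, ∑ i with f i = j, s i = B) := by
  rw [← exists_bijective_isSegregated_iff_exists_triples comp hsize hB hlow hhigh hsizes]
  exact ⟨exists_congr fun _ => and_congr_right fun hp =>
      placementCost_eq_zero_iff hp hpos hΔ hτ hτ1,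
    exists_congr fun _ => and_congr_right fun hp =>
      placementCostOne_eq_zero_iff hp hpos hΔ hτ hτ1⟩

/-- On a `2`-regular graph that is a disjoint union of `3k` cycles of lengths
`s 0, …, s (3k-1)` (each at least `3`) with `n/(4k) < s i < n/(2k)`, `k ∣ n = |V|`,
`k` agent types each of size `n/k` and `τ ∈ (1/2, 1)`: in both the one-versus-all and the
one-versus-one SSG, a bijective placement with placement cost `0` exists iff the cycles
can be partitioned into `k` triples whose lengths each sum to `n/k`. -/
theorem statement15 {V A : Type*} [Fintype V] [Fintype A] (k : ℕ) (hk : 1 ≤ k)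
    (G : SimpleGraph V) (hreg : IsRegular G 2)
    (s : Fin (3 * k) → ℕ) (hs : ∀ i, 3 ≤ s i)
    (comp : G.ConnectedComponent ≃ Fin (3 * k))
    (hsize : ∀ i,
      (Finset.univ.filter fun v => G.connectedComponentMk v = comp.symm i).card = s i)
    (n : ℕ) (hn : n = ∑ i, s i) (hV : Fintype.card V = n)
    (hlow : ∀ i, n < 4 * k * s i) (hhigh : ∀ i, 2 * k * s i < n)
    (hdvd : k ∣ n)
    (t : A → Fin k) (hA : Fintype.card A = n)
    (hsizes : ∀ j, (Finset.univ.filter fun a => t a = j).card = n / k)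
    (τ : ℝ) (hτ : 1 / 2 < τ) (hτ1 : τ < 1) :
    ((∃ p : A → V, Function.Bijective p ∧ placementCost G t τ p = 0) ↔
      (∃ f : Fin (3 * k) → Fin k,
        (∀ j, (Finset.univ.filter fun i => f i = j).card = 3) ∧
        (∀ j, ∑ i ∈ Finset.univ.filter (fun i => f i = j), s i = n / k))) ∧
    ((∃ p : A → V, Function.Bijective p ∧ placementCostOne G t τ p = 0) ↔
      (∃ f : Fin (3 * k) → Fin k,
        (∀ j, (Finset.univ.filter fun i => f i = j).card = 3) ∧
        (∀ j, ∑ i ∈ Finset.univ.filter (fun i => f i = j), s i = n / k))) := by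
  have hlow' : ∀ i, n / k < 4 * s i := fun i =>
    Nat.div_lt_of_lt_mul ((hlow i).trans_eq (by ring))
  have hhigh' : ∀ i, 2 * s i < n / k := fun i =>
    (Nat.lt_div_iff_mul_lt' hdvd _).mpr ((hhigh i).trans_eq' (by ring))
  exact statement15_general (Δ := 2) (by simp [hreg.degree_eq]) (by simp [hreg.degree_eq])
    comp hsize (Nat.zero_lt_of_lt (hhigh' ⟨0, by lia⟩)) hlow' hhigh' hsizes
    (by norm_num at hτ ⊢; exact hτ) hτ1.le

end Schelling
end
end

section
/- For every intolerance parameter τ with 0.9 < τ < 1, there exist a finite simple graph G = (V,E) and a set A of agents with |A| = |V| partitioned into two types such that no bijective placement p : A → V of minimum placement cost is swap-stable; that is, in the swap Schelling game with two types there is a network on which every optimal placement admits an improving swap. -/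
open Finset
open scoped Classical

noncomputable section

namespace Schelling

variable {V A : Type*} [Fintype V] [Fintype A] {k : ℕ}

/-!
Put `m` agents of one type and `m + 1` of the other on the complete bipartite graph `K_{m,m+1}`.
All degrees are at most `m + 1`, so for `τ > 1 - 1 / (m + 1)` an agent with any neighbor of the
other type is discontent. A content agent therefore shares its type with the whole opposite
part, which by counting forces the majority type to fill the small part and one node of the large
part. Such placements exist, hence every optimal placement has this form. Swapping a minority
agent with a majority agent of the small part then improves both: their same-type fractions rise
from `0` to `(m - 1) / (m + 1)` and from `1 / (m + 1)` to `(m - 1) / m`. Taking `m = 2` gives the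
smallest threshold, `2 / 3`.
-/

section SameTypeFraction

variable {W : Type*} {G : SimpleGraph W} {t : A → Fin k} {τ : ℝ} {p q : A → W} {a b : A}

lemma mem_nbrs : b ∈ nbrs G p a ↔ G.Adj (p a) (p b) := by
  simp [nbrs]

lemma posCount_eq_card_filter_nbrs : posCount G t p a = #{b ∈ nbrs G p a | t b = t a} := by
  rw [posCount, nbrs, filter_filter]

lemma negCountAll_eq_card_filter_nbrs : negCountAll G t p a = #{b ∈ nbrs G p a | t b ≠ t a} := by
  rw [negCountAll, nbrs, filter_filter]

lemma posCount_add_negCountAll : posCount G t p a + negCountAll G t p a = #(nbrs G p a) := by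
  rw [posCount_eq_card_filter_nbrs, negCountAll_eq_card_filter_nbrs,
    card_filter_add_card_filter_not]

variable (G t p a) in
/-- The fraction of the neighbors of `a` under `p` that have the type of `a`. An agent without
neighbors has fraction `0 / 0 = 0`, in accordance with its cost `τ`. -/
def sameTypeFraction : ℝ := posCount G t p a / #(nbrs G p a)

lemma costAll_eq_max (hτ : 0 ≤ τ) : costAll G t τ p a = max 0 (τ - sameTypeFraction G t p a) := by
  unfold costAll sameTypeFraction
  split_ifs with h
  · simp [h, hτ]
  · rw [← posCount_add_negCountAll (t := t), Nat.cast_add]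

lemma costAll_eq_zero_iff_s16 (hτ : 0 ≤ τ) :
    costAll G t τ p a = 0 ↔ τ ≤ sameTypeFraction G t p a := by
  rw [costAll_eq_max hτ, max_eq_left_iff, sub_nonpos]

lemma sameTypeFraction_nonneg : 0 ≤ sameTypeFraction G t p a := by
  unfold sameTypeFraction
  positivity

lemma costAll_lt_costAll (hp : sameTypeFraction G t p a < τ)
    (hpq : sameTypeFraction G t p a < sameTypeFraction G t q b) :
    costAll G t τ q b < costAll G t τ p a := by
  have hτ : 0 ≤ τ := sameTypeFraction_nonneg.trans hp.le
  rw [costAll_eq_max hτ, costAll_eq_max hτ]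
  exact max_lt (lt_max_of_lt_right (by linarith)) (lt_max_of_lt_right (by linarith))

lemma sameTypeFraction_pos (hb : b ∈ nbrs G p a) (hba : t b = t a) :
    0 < sameTypeFraction G t p a := by
  have hnbrs : 0 < #(nbrs G p a) := card_pos.2 ⟨b, hb⟩
  have hpos : 0 < posCount G t p a := by
    rw [posCount_eq_card_filter_nbrs]
    exact card_pos.2 ⟨b, mem_filter.2 ⟨hb, hba⟩⟩
  unfold sameTypeFraction
  positivity

lemma sameTypeFraction_eq_zero (h : ∀ b ∈ nbrs G p a, t b ≠ t a) :
    sameTypeFraction G t p a = 0 := by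
  rw [sameTypeFraction, posCount_eq_card_filter_nbrs, filter_false_of_mem h]
  simp

lemma sameTypeFraction_eq_one_sub (h : (nbrs G p a).Nonempty) :
    sameTypeFraction G t p a = 1 - negCountAll G t p a / #(nbrs G p a) := by
  have hnbrs : (#(nbrs G p a) : ℝ) ≠ 0 := Nat.cast_ne_zero.2 h.card_ne_zero
  rw [sameTypeFraction, eq_sub_iff_add_eq, ← add_div, ← Nat.cast_add, posCount_add_negCountAll,
    div_self hnbrs]

lemma sameTypeFraction_eq_one (h : (nbrs G p a).Nonempty) (hsame : ∀ b ∈ nbrs G p a, t b = t a) :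
    sameTypeFraction G t p a = 1 := by
  rw [sameTypeFraction_eq_one_sub h, negCountAll_eq_card_filter_nbrs,
    filter_false_of_mem fun b hb ↦ not_not.2 (hsame b hb)]
  simp

lemma sameTypeFraction_le_of_ne {d : ℕ} (hd : #(nbrs G p a) ≤ d) (hb : b ∈ nbrs G p a)
    (hba : t b ≠ t a) : sameTypeFraction G t p a ≤ 1 - 1 / d := by
  have hnbrs : 0 < #(nbrs G p a) := card_pos.2 ⟨b, hb⟩
  have hneg : 1 ≤ negCountAll G t p a := by
    rw [negCountAll_eq_card_filter_nbrs]
    exact card_pos.2 ⟨b, mem_filter.2 ⟨hb, hba⟩⟩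
  rw [sameTypeFraction_eq_one_sub ⟨b, hb⟩]
  gcongr
  exact_mod_cast hneg

lemma type_eq_of_costAll_eq_zero {d : ℕ} (hd : #(nbrs G p a) ≤ d) (hτ : 1 - 1 / (d : ℝ) < τ)
    (ha : costAll G t τ p a = 0) (hb : b ∈ nbrs G p a) : t b = t a := by
  by_contra hba
  have hfrac : sameTypeFraction G t p a < τ := (sameTypeFraction_le_of_ne hd hb hba).trans_lt hτ
  have hτ₀ : 0 ≤ τ := sameTypeFraction_nonneg.trans hfrac.le
  exact hfrac.not_ge ((costAll_eq_zero_iff_s16 hτ₀).1 ha)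

lemma placementCost_lt_card_iff :
    placementCost G t τ p < Fintype.card A ↔ ∃ a, costAll G t τ p a = 0 := by
  rw [placementCost, card_lt_iff_ne_univ, ne_eq, filter_eq_self]
  simp

end SameTypeFraction

section Segregation

variable {W B : Type*} {S : Finset W} {t : B → Fin 2} {p : B → W} {a b s : B}

/-- The agents of type `0` are those that `p` places on `S` together with the agent `a`
outside `S`; so type `0` is segregated as far as its surplus of one agent over the size
of `S` permits. -/
structure IsSegregatedAround (S : Finset W) (t : B → Fin 2) (p : B → W) (a : B) : Prop where
  notMem : p a ∉ S
  type_eq_zero_iff : ∀ b, t b = 0 ↔ b = a ∨ p b ∈ S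

namespace IsSegregatedAround

lemma type_eq_zero_of_mem (h : IsSegregatedAround S t p a) (hs : p s ∈ S) : t s = 0 :=
  (h.type_eq_zero_iff s).2 (.inr hs)

lemma notMem_of_type_eq_one (h : IsSegregatedAround S t p a) (hb : t b = 1) : p b ∉ S := by
  intro hbS
  have hb₀ := h.type_eq_zero_of_mem hbS
  lia

end IsSegregatedAround

end Segregation

section CompleteBipartite

variable {W : Type*} {S : Finset W} {p : A → W} {a b s : A}

/-- The complete bipartite graph whose parts are `S` and its complement. -/
def completeBipartiteOn (S : Finset W) : SimpleGraph W :=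
  (⊤ : SimpleGraph W).between S Sᶜ

/-- The agents that `p` places on nodes of `S`. -/
def occupants (p : A → W) (S : Finset W) : Finset A := {a | p a ∈ S}

lemma mem_occupants : a ∈ occupants p S ↔ p a ∈ S := by
  simp [occupants]

lemma card_occupants (hp : p.Bijective) : #(occupants p S) = #S := by
  rw [← card_image_of_injective _ hp.injective]
  congr 1
  ext v
  obtain ⟨a, rfl⟩ := hp.surjective v
  simp [mem_occupants, hp.injective.eq_iff]

lemma nbrs_of_mem (ha : p a ∈ S) : nbrs (completeBipartiteOn S) p a = (occupants p S)ᶜ := by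
  ext b
  have hne : p b ∉ S → p a ≠ p b := fun hb h ↦ hb (h ▸ ha)
  simpa [mem_nbrs, mem_occupants, completeBipartiteOn, SimpleGraph.between_adj, ha] using hne

lemma nbrs_of_notMem (ha : p a ∉ S) : nbrs (completeBipartiteOn S) p a = occupants p S := by
  ext b
  have hne : p b ∈ S → p a ≠ p b := fun hb h ↦ ha (h ▸ hb)
  simpa [mem_nbrs, mem_occupants, completeBipartiteOn, SimpleGraph.between_adj, ha] using hne

variable {t : A → Fin 2} {τ : ℝ}

lemma card_eq_of_card_types (h₀ : #{a | t a = 0} = #S + 1) (h₁ : #{a | t a = 1} = #S) :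
    Fintype.card A = #S + (#S + 1) := by
  have hcompl : #{a | ¬ t a = 0} = #S := by
    rw [← h₁]
    congr! 2 with a
    lia
  rw [← card_univ, ← card_filter_add_card_filter_not (fun a ↦ t a = 0), h₀, hcompl, add_comm]

lemma card_compl_occupants (hp : p.Bijective) (h₀ : #{a | t a = 0} = #S + 1)
    (h₁ : #{a | t a = 1} = #S) : #(occupants p S)ᶜ = #S + 1 := by
  rw [card_compl, card_occupants hp, card_eq_of_card_types h₀ h₁, Nat.add_sub_cancel_left]

lemma card_nbrs_le (hp : p.Bijective) (h₀ : #{a | t a = 0} = #S + 1)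
    (h₁ : #{a | t a = 1} = #S) (a : A) : #(nbrs (completeBipartiteOn S) p a) ≤ #S + 1 := by
  by_cases ha : p a ∈ S
  · rw [nbrs_of_mem ha, card_compl_occupants hp h₀ h₁]
  · rw [nbrs_of_notMem ha, card_occupants hp]
    exact Nat.le_succ _

lemma isSegregatedAround_of_costAll_eq_zero (hp : p.Bijective) (h₀ : #{a | t a = 0} = #S + 1)
    (h₁ : #{a | t a = 1} = #S) (hτ : 1 - 1 / (#S + 1 : ℝ) < τ)
    (ha : costAll (completeBipartiteOn S) t τ p a = 0) : IsSegregatedAround S t p a := by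
  have hsame : insert a (nbrs (completeBipartiteOn S) p a) ⊆ ({b | t b = t a} : Finset A) := by
    intro b hb
    obtain rfl | hb := mem_insert.1 hb
    · simp
    · simpa using type_eq_of_costAll_eq_zero (card_nbrs_le hp h₀ h₁ a)
        (by exact_mod_cast hτ) ha hb
  have hself : a ∉ nbrs (completeBipartiteOn S) p a := by simp [mem_nbrs]
  have hcard := card_le_card hsame
  rw [card_insert_of_notMem hself] at hcard
  have htype : t a = 0 ∨ t a = 1 := by lia
  by_cases haS : p a ∈ S
  · rw [nbrs_of_mem haS, card_compl_occupants hp h₀ h₁] at hcard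
    obtain h | h := htype <;> rw [h] at hcard <;> lia
  · rw [nbrs_of_notMem haS] at hsame hself hcard
    rw [card_occupants hp] at hcard
    have hta : t a = 0 := htype.resolve_right fun h ↦ by rw [h] at hcard; lia
    rw [hta] at hsame
    have heq : insert a (occupants p S) = ({b | t b = 0} : Finset A) :=
      eq_of_subset_of_card_le hsame
        (by rw [h₀, card_insert_of_notMem hself, card_occupants hp])
    exact ⟨haS, fun b ↦ by simpa [mem_occupants] using (Finset.ext_iff.1 heq b).symm⟩

namespace IsSegregatedAround

lemma costAll_eq_zero (h : IsSegregatedAround S t p a) (hp : p.Bijective) (hS : S.Nonempty)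
    (hτ₀ : 0 ≤ τ) (hτ₁ : τ ≤ 1) : costAll (completeBipartiteOn S) t τ p a = 0 := by
  have hnbrs := nbrs_of_notMem h.notMem
  have hta : t a = 0 := (h.type_eq_zero_iff a).2 (.inl rfl)
  rw [costAll_eq_zero_iff_s16 hτ₀, sameTypeFraction_eq_one]
  · exact hτ₁
  · rwa [hnbrs, ← card_pos, card_occupants hp, card_pos]
  · intro b hb
    rw [hnbrs, mem_occupants] at hb
    rw [hta, h.type_eq_zero_of_mem hb]

lemma sameTypeFraction_of_type_eq_one (h : IsSegregatedAround S t p a) (hb : t b = 1) :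
    sameTypeFraction (completeBipartiteOn S) t p b = 0 := by
  refine sameTypeFraction_eq_zero fun c hc ↦ ?_
  rw [nbrs_of_notMem (h.notMem_of_type_eq_one hb), mem_occupants] at hc
  rw [hb, h.type_eq_zero_of_mem hc]
  exact zero_ne_one

lemma sameTypeFraction_of_mem (h : IsSegregatedAround S t p a) (hp : p.Bijective)
    (h₀ : #{a | t a = 0} = #S + 1) (h₁ : #{a | t a = 1} = #S) (hs : p s ∈ S) :
    sameTypeFraction (completeBipartiteOn S) t p s = 1 / (#S + 1) := by
  have hsame : {c ∈ (occupants p S)ᶜ | t c = t s} = {a} := by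
    ext c
    have hts : t s = 0 := h.type_eq_zero_of_mem hs
    have hca : c = a → p c ∉ S := fun hca ↦ hca ▸ h.notMem
    simp only [mem_filter, mem_compl, mem_occupants, mem_singleton, hts, h.type_eq_zero_iff]
    tauto
  rw [sameTypeFraction, posCount_eq_card_filter_nbrs, nbrs_of_mem hs, hsame,
    card_compl_occupants hp h₀ h₁]
  simp

lemma sameTypeFraction_swap_pos (h : IsSegregatedAround S t p a) (h₁ : #{a | t a = 1} = #S)
    (hS : 1 < #S) (hb : t b = 1) (hs : p s ∈ S) :
    0 < sameTypeFraction (completeBipartiteOn S) t (p ∘ Equiv.swap b s) b := by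
  obtain ⟨c, hc, hcb⟩ := exists_mem_ne (h₁ ▸ hS) b
  have htc : t c = 1 := by simpa using hc
  have hcs : c ≠ s := fun hcs ↦ h.notMem_of_type_eq_one htc (hcs ▸ hs)
  refine sameTypeFraction_pos (b := c) ?_ (by rw [htc, hb])
  rw [nbrs_of_mem (by simpa using hs), mem_compl, mem_occupants, Function.comp_apply,
    Equiv.swap_apply_of_ne_of_ne hcb hcs]
  exact h.notMem_of_type_eq_one htc

lemma sameTypeFraction_swap_of_mem (h : IsSegregatedAround S t p a) (hp : p.Bijective)
    (hb : t b = 1) (hs : p s ∈ S) :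
    sameTypeFraction (completeBipartiteOn S) t (p ∘ Equiv.swap b s) s = 1 - 1 / #S := by
  have hbS := h.notMem_of_type_eq_one hb
  have hq : (p ∘ Equiv.swap b s).Bijective := hp.comp (Equiv.bijective _)
  have hnbrs : nbrs (completeBipartiteOn S) (p ∘ Equiv.swap b s) s =
      occupants (p ∘ Equiv.swap b s) S := nbrs_of_notMem (by simpa using hbS)
  have hother : {c ∈ occupants (p ∘ Equiv.swap b s) S | t c ≠ t s} = {b} := by
    have hts : t s = 0 := h.type_eq_zero_of_mem hs
    ext c
    simp only [mem_filter, mem_occupants, mem_singleton, hts, Function.comp_apply]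
    refine ⟨fun ⟨hcS, hc⟩ ↦ by_contra fun hcb ↦ ?_, ?_⟩
    · have hcs : c ≠ s := fun hcs ↦ hc (hcs ▸ hts)
      rw [Equiv.swap_apply_of_ne_of_ne hcb hcs] at hcS
      exact hc (h.type_eq_zero_of_mem hcS)
    · rintro rfl
      simp [hs, hb]
  have hSne : (nbrs (completeBipartiteOn S) (p ∘ Equiv.swap b s) s).Nonempty := by
    rw [hnbrs, ← card_pos, card_occupants hq]
    exact card_pos.2 ⟨_, hs⟩
  rw [sameTypeFraction_eq_one_sub hSne, negCountAll_eq_card_filter_nbrs, hnbrs, hother,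
    card_occupants hq]
  simp

lemma not_swapStable (h : IsSegregatedAround S t p a) (hp : p.Bijective)
    (h₀ : #{a | t a = 0} = #S + 1) (h₁ : #{a | t a = 1} = #S) (hS : 1 < #S)
    (hτ : 1 - 1 / (#S + 1 : ℝ) < τ) : ¬ SwapStable (costAll (completeBipartiteOn S) t τ) p := by
  have hS' : (2 : ℝ) ≤ #S := by exact_mod_cast hS
  have hsmall : 1 / (#S + 1 : ℝ) ≤ 1 / 3 := by gcongr; linarith
  have hlarge : 1 / (#S : ℝ) ≤ 1 / 2 := by gcongr
  obtain ⟨b, hb⟩ : ∃ b, t b = 1 := by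
    obtain ⟨b, hb⟩ := card_pos.1 (h₁ ▸ zero_lt_one.trans hS)
    exact ⟨b, by simpa using hb⟩
  obtain ⟨s, hs⟩ : ∃ s, p s ∈ S := by
    obtain ⟨v, hv⟩ := card_pos.1 (zero_lt_one.trans hS)
    obtain ⟨s, rfl⟩ := hp.surjective v
    exact ⟨s, hv⟩
  have hbs : b ≠ s := fun hbs ↦ h.notMem_of_type_eq_one hb (hbs ▸ hs)
  have hfrac_b := h.sameTypeFraction_of_type_eq_one hb
  have hfrac_s := h.sameTypeFraction_of_mem hp h₀ h₁ hs
  refine fun hstable ↦ hstable _ ⟨b, s, hbs, rfl, ?_, ?_⟩ <;>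
    refine costAll_lt_costAll (by linarith) ?_
  · rw [hfrac_b]
    exact h.sameTypeFraction_swap_pos h₁ hS hb hs
  · rw [hfrac_s, h.sameTypeFraction_swap_of_mem hp hb hs]
    linarith

end IsSegregatedAround

theorem not_swapStable_of_optimal {p₀ : A → W} {a₀ : A} (hseg : IsSegregatedAround S t p₀ a₀)
    (hp₀ : p₀.Bijective) (h₀ : #{a | t a = 0} = #S + 1) (h₁ : #{a | t a = 1} = #S)
    (hS : 1 < #S) (hτ : 1 - 1 / (#S + 1 : ℝ) < τ) (hτ₁ : τ ≤ 1) (hp : p.Bijective)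
    (hopt : placementCost (completeBipartiteOn S) t τ p ≤
      placementCost (completeBipartiteOn S) t τ p₀) :
    ¬ SwapStable (costAll (completeBipartiteOn S) t τ) p := by
  have hτ₀ : 0 ≤ τ := by
    have hinv : 1 / (#S + 1 : ℝ) ≤ 1 := div_le_one_of_le₀ (by simp) (by positivity)
    linarith
  have hcontent₀ := hseg.costAll_eq_zero hp₀ (card_pos.1 (zero_lt_one.trans hS)) hτ₀ hτ₁
  obtain ⟨a, ha⟩ : ∃ a, costAll (completeBipartiteOn S) t τ p a = 0 :=
    placementCost_lt_card_iff.1 (hopt.trans_lt (placementCost_lt_card_iff.2 ⟨a₀, hcontent₀⟩))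
  exact (isSegregatedAround_of_costAll_eq_zero hp h₀ h₁ hτ ha).not_swapStable hp h₀ h₁ hS hτ

end CompleteBipartite

theorem statement16_general (τ : ℝ) (hτ : 2 / 3 < τ) (hτ₁ : τ ≤ 1) :
    ∃ (N : ℕ) (G : SimpleGraph (Fin N)) (t : Fin N → Fin 2),
      Function.Surjective t ∧
      ∀ p : Fin N → Fin N, Function.Bijective p →
        (∀ q : Fin N → Fin N, Function.Bijective q →
          placementCost G t τ p ≤ placementCost G t τ q) →
        ¬ SwapStable (costAll G t τ) p := by
  let S : Finset (Fin 5) := {0, 1}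
  let t : Fin 5 → Fin 2 := ![0, 0, 0, 1, 1]
  have hcard : #S = 2 := rfl
  have hseg : IsSegregatedAround S t id 2 := ⟨by decide, by decide⟩
  refine ⟨5, completeBipartiteOn S, t, by decide, fun p hp hopt ↦ ?_⟩
  refine not_swapStable_of_optimal hseg Function.bijective_id (by decide) (by decide) (by decide)
    ?_ hτ₁ hp (hopt id Function.bijective_id)
  norm_num [hcard, hτ]

/-- For every `0.9 < τ < 1` there are a graph and two surjectively used agent types on
`|A| = |V|` agents such that no bijective placement of minimum placement cost is
swap-stable: every optimal placement admits an improving swap. -/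
theorem statement16 (τ : ℝ) (hτ1 : (0.9 : ℝ) < τ) (hτ2 : τ < 1) :
    ∃ (N : ℕ) (G : SimpleGraph (Fin N)) (t : Fin N → Fin 2),
      Function.Surjective t ∧
      ∀ p : Fin N → Fin N, Function.Bijective p →
        (∀ q : Fin N → Fin N, Function.Bijective q →
          placementCost G t τ p ≤ placementCost G t τ q) →
        ¬ SwapStable (costAll G t τ) p := by
  exact statement16_general τ (by norm_num at hτ1 ⊢; linarith) hτ2.le

end Schelling
end
end
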